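/- arXiv:2603.11374 — 2 statements merged into one kernel-verified Lean document; each statement's English description precedes it below -/
import Mathlib

section
/- For n ≥ 1, N ≥ 1 and a partition λ of n with at most N parts, the dimension of the irreducible U(N)-representation with highest weight λ equals (1/n!)·∑_{σ ∈ S_n} χ^λ(σ)·N^{#σ}, where χ^λ is the irreducible character of S_n indexed by λ and #σ the number of cycles of σ. -/
open MvPolynomial

/-!
In the variables `x` repeated `N` times, the power sum of the cycle type of `σ` is
`N ^ #σ * p_σ(x)`; it enumerates, by weight, the `σ`-invariant words in the letters `(i, k)`, where
`(i, k)` has weight `x_i`. Summed over `σ`, these words cover every multiset of `n` letters `n!`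
times (Burnside), so the sum is `n!` times the complete homogeneous polynomial `h_n` in the repeated
variables, which is the degree `n` part of `∏ i, (1 - x_i)⁻ᴺ`. Its coefficient at `s_λ` is a
determinant of binomial coefficients, whose columns are polynomials of degree less than `N`
evaluated at the numbers `λ_i + N - 1 - i`. Hence it is a constant multiple of the Vandermonde
determinant of these numbers, and the constant is found at `λ = 0`, where the matrix is
unitriangular.
-/

open Finset

section Burnside

variable {G X Z M : Type*} [Group G] [Fintype G] [MulAction G X] [DecidableEq X]

theorem sum_card_stabilizer_of_forall_mem_orbit_iff {s : Finset X} {x₀ : X}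
    (hs : ∀ x, x ∈ s ↔ x ∈ MulAction.orbit G x₀) :
    ∑ x ∈ s, #{g : G | g • x = x} = Fintype.card G := by
  classical
  let : Fintype (MulAction.orbit G x₀) := Set.fintypeRange fun g : G => g • x₀
  have card_stabilizer (x : X) : #{g : G | g • x = x} = Fintype.card (MulAction.stabilizer G x) :=
    (Fintype.card_subtype fun g : G => g • x = x).symm
  have card_stabilizer_eq : ∀ x ∈ s, #{g : G | g • x = x} = #{g : G | g • x₀ = x₀} := by
    intro x hx
    rw [card_stabilizer, card_stabilizer]
    exact Fintype.card_congr
      (MulAction.stabilizerEquivStabilizerOfOrbitRel ((hs x).1 hx)).toEquiv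
  have card_orbit : #s = Fintype.card (MulAction.orbit G x₀) := by
    rw [← Set.toFinset_card]
    congr 1
    ext x
    simp only [hs, Set.mem_toFinset]
  rw [sum_congr rfl card_stabilizer_eq, sum_const, smul_eq_mul, card_orbit, card_stabilizer,
    MulAction.card_orbit_mul_card_stabilizer_eq_card_group]

theorem sum_sum_fixed_eq_card_nsmul_sum [Fintype X] [Fintype Z] [AddCommMonoid M] {π : X → Z}
    (hsurj : Function.Surjective π) (horbit : ∀ x y, π x = π y ↔ x ∈ MulAction.orbit G y)
    (w : Z → M) :
    ∑ g : G, ∑ x : X with g • x = x, w (π x) = Fintype.card G • ∑ z, w z := by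
  classical
  simp_rw [sum_filter]
  rw [sum_comm]
  simp_rw [← sum_filter, sum_const]
  rw [← sum_fiberwise univ π, smul_sum]
  refine sum_congr rfl fun z _ => ?_
  obtain ⟨x₀, rfl⟩ := hsurj z
  rw [sum_congr rfl fun x hx => by rw [(mem_filter.1 hx).2], ← sum_smul,
    sum_card_stabilizer_of_forall_mem_orbit_iff (x₀ := x₀) fun x => by
      rw [mem_filter_univ, horbit]]

end Burnside

section Content

variable {α Y : Type*} [Fintype α]

/-- The content of a word `f` with positions `α` and letters `Y`: the multiset of its letters. -/
def wordContent (f : α → Y) : Sym Y (Fintype.card α) :=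
  ⟨univ.val.map f, by simp⟩

theorem wordContent_surjective :
    Function.Surjective (wordContent : (α → Y) → Sym Y (Fintype.card α)) := by
  classical
  rintro ⟨m, hm⟩
  let e : α ≃ m.ToType := Fintype.equivOfCardEq (by rw [Multiset.card_coe, hm])
  refine ⟨fun a => (e a).1, Subtype.ext ?_⟩
  change univ.val.map ((fun b : m.ToType => b.1) ∘ e) = m
  rw [← Multiset.map_map, Multiset.map_univ_val_equiv, Multiset.map_univ_coe]

theorem wordContent_eq_iff_exists_perm {f g : α → Y} :
    wordContent f = wordContent g ↔ ∃ σ : Equiv.Perm α, g ∘ σ = f := by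
  classical
  constructor
  · intro h
    have card_fiber (y : Y) : Fintype.card {a // f a = y} = Fintype.card {a // g a = y} := by
      have hcount := congrArg (Multiset.count y ∘ Subtype.val) h
      simpa [wordContent, Multiset.count_map, Fintype.card_subtype, eq_comm, Finset.card_def]
        using hcount
    let e := fun y => Fintype.equivOfCardEq (card_fiber y)
    exact ⟨Equiv.ofFiberEquiv e, funext (Equiv.ofFiberEquiv_map e)⟩
  · rintro ⟨σ, rfl⟩
    refine Subtype.ext ?_
    change univ.val.map (g ∘ σ) = univ.val.map g
    rw [← Multiset.map_map, Multiset.map_univ_val_equiv]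

theorem wordContent_eq_iff_mem_orbit {f g : α → Y} :
    wordContent f = wordContent g ↔ f ∈ MulAction.orbit (Equiv.Perm α)ᵈᵐᵃ g := by
  rw [wordContent_eq_iff_exists_perm]
  exact DomMulAct.mk.exists_congr_left

theorem sum_sum_comp_eq_self [Fintype Y] [DecidableEq α] [DecidableEq Y] {M : Type*}
    [AddCommMonoid M] (w : Sym Y (Fintype.card α) → M) :
    ∑ σ : Equiv.Perm α, ∑ f : α → Y with f ∘ σ = f, w (wordContent f) =
      (Fintype.card α).factorial • ∑ s, w s := by
  let : Fintype (Equiv.Perm α)ᵈᵐᵃ := Fintype.ofEquiv _ DomMulAct.mk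
  rw [← Fintype.card_perm, Fintype.card_congr DomMulAct.mk,
    ← sum_sum_fixed_eq_card_nsmul_sum wordContent_surjective
      fun _ _ => wordContent_eq_iff_mem_orbit]
  exact Fintype.sum_equiv DomMulAct.mk _ _ fun _ => rfl

end Content

section Cycles

variable {α : Type*}

/-- The type of cycles of `σ`, encoded as orbits so that each fixed point is a cycle of its own. -/
abbrev CycleClass (σ : Equiv.Perm α) : Type _ :=
  Quotient (Equiv.Perm.SameCycle.setoid σ)

namespace CycleClass

open Equiv.Perm

variable {σ : Equiv.Perm α} {a b : α}

/-- The cycle of `σ` through `a`. -/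
def mk (σ : Equiv.Perm α) (a : α) : CycleClass σ := Quotient.mk _ a

theorem mk_eq_mk_iff : mk σ a = mk σ b ↔ σ.SameCycle a b :=
  Quotient.eq (r := SameCycle.setoid σ)

theorem mk_out (q : CycleClass σ) : mk σ q.out = q := Quotient.out_eq q

theorem mk_surjective : Function.Surjective (mk σ) := Quotient.mk_surjective

theorem mk_apply : mk σ (σ a) = mk σ a :=
  mk_eq_mk_iff.2 (sameCycle_apply_left.2 (SameCycle.refl σ a))

theorem apply_eq_of_sameCycle {Y : Type*} {f : α → Y} (hf : f ∘ σ = f) (h : σ.SameCycle a b) :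
    f a = f b := by
  obtain ⟨n, rfl⟩ := h
  have hperm : f ∘ (σ ^ n : Equiv.Perm α) = f := by
    have hstab : DomMulAct.mk σ ∈ MulAction.stabilizer (Equiv.Perm α)ᵈᵐᵃ f :=
      DomMulAct.mem_stabilizer_iff.2 hf
    exact DomMulAct.mem_stabilizer_iff.1 (zpow_mem hstab n)
  exact (congrFun hperm a).symm

variable [Fintype α] [DecidableEq α]

instance : DecidableEq (CycleClass σ) :=
  @Quotient.decidableEq _ (SameCycle.setoid σ) (inferInstanceAs (DecidableRel σ.SameCycle))

instance : Fintype (CycleClass σ) :=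
  @Quotient.fintype _ _ (SameCycle.setoid σ) (inferInstanceAs (DecidableRel σ.SameCycle))

/-- The length of a cycle. -/
def size (q : CycleClass σ) : ℕ :=
  #{a | mk σ a = q}

theorem size_mk_of_apply_ne (ha : σ a ≠ a) : (mk σ a).size = #(σ.cycleOf a).support := by
  refine congrArg card (Finset.ext fun b => ?_)
  rw [mem_filter_univ, mem_support_cycleOf_iff' ha, mk_eq_mk_iff, sameCycle_comm]

theorem size_mk_of_apply_eq (ha : σ a = a) : (mk σ a).size = 1 := by
  refine card_eq_one.2 ⟨a, Finset.ext fun b => ?_⟩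
  rw [mem_filter_univ, mem_singleton, mk_eq_mk_iff]
  exact ⟨fun h => h.eq_of_right ha, fun h => h ▸ SameCycle.refl σ b⟩

theorem two_le_size_mk_iff : 2 ≤ (mk σ a).size ↔ σ a ≠ a := by
  refine ⟨fun h ha => ?_, fun ha => ?_⟩
  · rw [size_mk_of_apply_eq ha] at h
    omega
  · rwa [size_mk_of_apply_ne ha, two_le_card_support_cycleOf_iff]

theorem size_pos (q : CycleClass σ) : 0 < q.size := by
  obtain ⟨a, rfl⟩ := mk_surjective q
  exact card_pos.2 ⟨a, mem_filter_univ _ |>.2 rfl⟩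

theorem sum_size (σ : Equiv.Perm α) : ∑ q : CycleClass σ, q.size = Fintype.card α :=
  (card_eq_sum_card_fiberwise fun _ _ => mem_univ _).symm

theorem two_le_size_iff (q : CycleClass σ) : 2 ≤ q.size ↔ q.out ∈ σ.support := by
  rw [← two_le_size_mk_iff.trans mem_support.symm, mk_out]

theorem injOn_cycleOf_out :
    Set.InjOn (fun q : CycleClass σ => σ.cycleOf q.out)
      ({q | 2 ≤ q.size} : Finset (CycleClass σ)) := by
  intro q hq r hr h
  rw [mem_coe, mem_filter_univ, two_le_size_iff] at hq hr
  rw [← mk_out q, ← mk_out r, mk_eq_mk_iff]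
  exact (sameCycle_iff_cycleOf_eq_of_mem_support hq hr).2 h

theorem image_cycleOf_out :
    ({q | 2 ≤ q.size} : Finset (CycleClass σ)).image (fun q => σ.cycleOf q.out) =
      σ.cycleFactorsFinset := by
  ext c
  rw [mem_image]
  constructor
  · rintro ⟨q, hq, rfl⟩
    rw [mem_filter_univ, two_le_size_iff] at hq
    exact cycleOf_mem_cycleFactorsFinset_iff.2 hq
  · intro hc
    obtain ⟨a, ha⟩ := (mem_cycleFactorsFinset_iff.1 hc).1.nonempty_support
    have hmoved : σ a ≠ a := mem_support.1 (mem_cycleFactorsFinset_support_le hc ha)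
    refine ⟨mk σ a, (mem_filter_univ _).2 (two_le_size_mk_iff.2 hmoved), ?_⟩
    rw [(mk_eq_mk_iff.1 (mk_out (mk σ a))).cycleOf_eq, cycle_is_cycleOf ha hc]

theorem map_size_filter_two_le (σ : Equiv.Perm α) :
    ({q | 2 ≤ q.size} : Finset (CycleClass σ)).val.map size = σ.cycleType := by
  rw [cycleType_def, ← image_cycleOf_out, image_val_of_injOn injOn_cycleOf_out, Multiset.map_map]
  refine Multiset.map_congr rfl fun q hq => ?_
  rw [mem_val, mem_filter_univ, two_le_size_iff, mem_support] at hq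
  rw [Function.comp_apply, Function.comp_apply, ← size_mk_of_apply_ne hq, mk_out]

theorem map_size_univ (σ : Equiv.Perm α) :
    (univ : Finset (CycleClass σ)).val.map size = σ.partition.parts := by
  have hfilter : ((univ : Finset (CycleClass σ)).val.map size).filter (2 ≤ ·) = σ.cycleType := by
    rw [Multiset.filter_map]
    exact map_size_filter_two_le σ
  have hones : ∀ k ∈ ((univ : Finset (CycleClass σ)).val.map size).filter (¬ 2 ≤ ·), k = 1 := by
    intro k hk
    obtain ⟨hk, hlt⟩ := Multiset.mem_filter.1 hk
    obtain ⟨q, -, rfl⟩ := Multiset.mem_map.1 hk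
    have := size_pos q
    omega
  have hsplit := Multiset.filter_add_not (2 ≤ ·) ((univ : Finset (CycleClass σ)).val.map size)
  rw [hfilter, Multiset.eq_replicate_card.2 hones] at hsplit
  have hsum := congrArg Multiset.sum hsplit
  rw [Multiset.sum_add, sum_cycleType, Multiset.sum_replicate, smul_eq_mul, mul_one] at hsum
  have hcard : ((univ : Finset (CycleClass σ)).val.map size).sum = Fintype.card α := sum_size σ
  rw [parts_partition, ← hsplit]
  congr
  omega

end CycleClass

variable [Fintype α] [DecidableEq α]

/-- A word is fixed by `σ` exactly when it is constant along each cycle: such words are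
functions on the cycles. -/
def cycleClassFunEquiv {Y : Type*} (σ : Equiv.Perm α) :
    (CycleClass σ → Y) ≃ {f : α → Y // f ∘ σ = f} where
  toFun h := ⟨h ∘ CycleClass.mk σ, funext fun _ => congrArg h CycleClass.mk_apply⟩
  invFun f := Quotient.lift f.1 fun _ _ => CycleClass.apply_eq_of_sameCycle f.2
  left_inv _ := funext fun q => Quotient.inductionOn q fun _ => rfl
  right_inv _ := rfl

theorem psumPart_partition_eq_sum_fixed {Y R : Type*} [Fintype Y] [DecidableEq Y] [CommSemiring R]
    (σ : Equiv.Perm α) :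
    psumPart Y R σ.partition = ∑ f : α → Y with f ∘ σ = f, ∏ a, X (f a) := by
  have hexpand : psumPart Y R σ.partition = ∑ h : CycleClass σ → Y, ∏ q, X (h q) ^ q.size := by
    rw [psumPart, ← CycleClass.map_size_univ, Multiset.map_map]
    exact Fintype.prod_sum fun (q : CycleClass σ) (y : Y) => (X y ^ q.size : MvPolynomial Y R)
  have hfiber (h : CycleClass σ → Y) :
      ∏ q, X (h q) ^ q.size = ∏ a, (X (h (CycleClass.mk σ a)) : MvPolynomial Y R) := by
    simp_rw [← prod_fiberwise' univ (CycleClass.mk σ) fun q => (X (h q) : MvPolynomial Y R),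
      prod_const]
    rfl
  simp_rw [hexpand, hfiber]
  rw [← sum_subtype_eq_sum_filter, subtype_univ]
  exact Fintype.sum_equiv (cycleClassFunEquiv σ) _ _ fun _ => rfl

end Cycles

section Complete

variable (ι κ R : Type*) [Fintype ι] [DecidableEq ι] [Fintype κ]

theorem hsymm_eq_sum_finsuppAntidiag [CommSemiring R] (n : ℕ) :
    hsymm ι R n = ∑ k ∈ finsuppAntidiag univ n, ∏ i, X i ^ k i := by
  have hmonomial (s : Sym ι n) :
      (s.1.map X).prod = ∏ i, (X i : MvPolynomial ι R) ^ s.1.count i := by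
    rw [prod_multiset_map_count]
    refine prod_subset (subset_univ _) fun i _ hi => ?_
    rw [Multiset.count_eq_zero.2 (mt Multiset.mem_toFinset.2 hi), pow_zero]
  simp_rw [hsymm, hmonomial, ← sum_coe_sort (finsuppAntidiag univ n)]
  refine Fintype.sum_equiv
    ((Sym.equivNatSum ι n).trans (Equiv.subtypeEquivRight fun k => ?_)) _ _ fun _ => rfl
  rw [mem_finsuppAntidiag, and_iff_left (subset_univ _), Finsupp.sum_fintype _ _ fun _ => rfl]
  rfl

theorem mk_pow_pow_eq_mk_multichoose {S : Type*} [CommRing S] (x : S) (d : ℕ) :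
    (PowerSeries.mk fun k => x ^ k) ^ d =
      PowerSeries.mk fun k => (Nat.multichoose d k : S) * x ^ k := by
  have hgeom : PowerSeries.rescale x (PowerSeries.mk 1) = PowerSeries.mk fun k => x ^ k := by
    ext k
    simp
  rw [← hgeom, ← map_pow]
  ext k
  rw [PowerSeries.coeff_rescale, PowerSeries.coeff_mk, mul_comm]
  congr 1
  cases d with
  | zero => cases k <;> simp [PowerSeries.coeff_one]
  | succ d =>
    rw [PowerSeries.mk_one_pow_eq_mk_choose_add, PowerSeries.coeff_mk, Nat.multichoose_eq,
      Nat.add_right_comm, Nat.add_sub_cancel, Nat.choose_symm_add]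

theorem rename_fst_hsymm [DecidableEq κ] [CommRing R] (n : ℕ) :
    rename Prod.fst (hsymm (ι × κ) R n) =
      ∑ k ∈ finsuppAntidiag univ n,
        ∏ i, (Nat.multichoose (Fintype.card κ) (k i) : MvPolynomial ι R) * X i ^ k i := by
  calc rename Prod.fst (hsymm (ι × κ) R n)
      = ∑ k ∈ finsuppAntidiag univ n, ∏ p : ι × κ, X p.1 ^ k p := by
        simp only [hsymm_eq_sum_finsuppAntidiag, map_sum, map_prod, map_pow, rename_X]
    _ = PowerSeries.coeff n
        (∏ p : ι × κ, PowerSeries.mk fun k => (X p.1 : MvPolynomial ι R) ^ k) := by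
        simp only [PowerSeries.coeff_prod, PowerSeries.coeff_mk]
    _ = PowerSeries.coeff n (∏ i : ι, PowerSeries.mk fun k =>
        (Nat.multichoose (Fintype.card κ) k : MvPolynomial ι R) * X i ^ k) := by
        simp only [Fintype.prod_prod_type, prod_const, card_univ, mk_pow_pow_eq_mk_multichoose]
    _ = _ := by
        simp only [PowerSeries.coeff_prod, PowerSeries.coeff_mk]

variable {ι κ R}

theorem coeff_rename_fst_hsymm [DecidableEq κ] [CommRing R] (m : ι →₀ ℕ) :
    coeff m (rename Prod.fst (hsymm (ι × κ) R m.degree)) =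
      ∏ i, (Nat.multichoose (Fintype.card κ) (m i) : R) := by
  have hmonomial (k : ι →₀ ℕ) :
      ∏ i, (Nat.multichoose (Fintype.card κ) (k i) : MvPolynomial ι R) * X i ^ k i =
        monomial k (∏ i, (Nat.multichoose (Fintype.card κ) (k i) : R)) := by
    rw [monomial_eq, Finsupp.prod_fintype _ _ fun _ => pow_zero _, prod_mul_distrib, map_prod]
    simp only [map_natCast]
  have hmem : m ∈ finsuppAntidiag univ m.degree := by
    simp [Finsupp.degree_eq_sum]
  simp_rw [rename_fst_hsymm, hmonomial, coeff_sum, coeff_monomial]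
  rw [sum_ite_eq' _ _, if_pos hmem]

end Complete

section Schur

variable {N : ℕ} {R : Type*} [CommRing R]

/-- The shifted partition `λ + δ`, where `δ = (N - 1, …, 1, 0)`. -/
def addStaircase (lam : Fin N → ℕ) (i : Fin N) : ℕ := lam i + i.rev

/-- The Vandermonde polynomial `∏_{i < j} (x_i - x_j)`. -/
noncomputable def vandermondePoly (N R) [CommRing R] : MvPolynomial (Fin N) R :=
  ∏ p : Fin N × Fin N with p.1 < p.2, (X p.1 - X p.2)

theorem prod_filter_fst_lt_snd {M : Type*} [CommMonoid M] (g : Fin N → Fin N → M) :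
    ∏ p : Fin N × Fin N with p.1 < p.2, g p.1 p.2 = ∏ i, ∏ j ∈ Ioi i, g i j :=
  prod_finset_product _ _ _ fun p => by simp

theorem vandermondePoly_eq_sum_perm :
    vandermondePoly N R = ∑ τ : Equiv.Perm (Fin N), (Equiv.Perm.sign τ : ℤ) •
      monomial (Finsupp.equivFunOnFinite.symm fun i => ((τ i).rev : ℕ)) 1 := by
  have hdet : vandermondePoly N R = (Matrix.projVandermonde 1 X).det := by
    rw [Matrix.det_projVandermonde, vandermondePoly,
      prod_filter_fst_lt_snd fun i j => (X i - X j : MvPolynomial (Fin N) R)]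
    simp only [Pi.one_apply, one_mul]
  rw [hdet, ← Matrix.det_transpose, Matrix.det_apply]
  refine sum_congr rfl fun τ _ => ?_
  rw [monomial_eq, Finsupp.prod_fintype _ _ fun _ => pow_zero _]
  simp [Matrix.projVandermonde_apply, Units.smul_def]

/-- The coefficient of `x^(λ + δ)` in `p` times the Vandermonde polynomial. For decreasing `λ` and
symmetric `p` this is the coefficient of the Schur polynomial `s_λ` in `p`, so that its values on
the power sums are the character values `χ^λ` (Frobenius). -/
noncomputable def schurCoeff (lam : Fin N → ℕ) : MvPolynomial (Fin N) R →ₗ[R] R :=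
  lcoeff R (Finsupp.equivFunOnFinite.symm (addStaircase lam)) ∘ₗ
    LinearMap.mulLeft R (vandermondePoly N R)

theorem sum_addStaircase_tsub_perm {lam : Fin N → ℕ} {τ : Equiv.Perm (Fin N)}
    (hle : ∀ i, ((τ i).rev : ℕ) ≤ addStaircase lam i) :
    ∑ i, (addStaircase lam i - (τ i).rev) = ∑ i, lam i := by
  have hrev : ∑ i, ((τ i).rev : ℕ) = ∑ i : Fin N, (i.rev : ℕ) :=
    Equiv.sum_comp τ fun i => (i.rev : ℕ)
  rw [sum_tsub_distrib _ fun i _ => hle i, hrev]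
  simp only [addStaircase, sum_add_distrib, Nat.add_sub_cancel]

theorem schurCoeff_eq_det (lam : Fin N → ℕ) (c : ℕ → R) (p : MvPolynomial (Fin N) R)
    (hp : ∀ m : Fin N →₀ ℕ, ∑ i, m i = ∑ i, lam i → coeff m p = ∏ i, c (m i)) :
    schurCoeff lam p = (Matrix.of fun i j : Fin N =>
      if (j.rev : ℕ) ≤ addStaircase lam i then c (addStaircase lam i - j.rev) else 0).det := by
  rw [schurCoeff, LinearMap.comp_apply, LinearMap.mulLeft_apply, lcoeff_apply,
    vandermondePoly_eq_sum_perm, sum_mul, coeff_sum, ← Matrix.det_transpose, Matrix.det_apply]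
  refine sum_congr rfl fun τ _ => ?_
  rw [smul_mul_assoc, coeff_smul, coeff_monomial_mul', one_mul, Units.smul_def]
  congr 1
  simp only [Matrix.transpose_apply, Matrix.of_apply]
  rw [prod_ite_zero]
  simp only [Finsupp.le_def, Finsupp.coe_equivFunOnFinite_symm, mem_univ, true_imp_iff]
  split_ifs with hle
  · rw [hp]
    · rfl
    · exact sum_addStaircase_tsub_perm hle
  · rfl

end Schur

section Det

variable {N : ℕ} {K : Type*} [Field K] [CharZero K]

theorem of_eval_eq_vandermonde_mul {R : Type*} [CommRing R] (v : Fin N → R)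
    (P : Fin N → Polynomial R) (hdeg : ∀ j, (P j).natDegree < N) :
    (Matrix.of fun i j => (P j).eval (v i)) =
      Matrix.vandermonde v * Matrix.of fun k j : Fin N => (P j).coeff k := by
  ext i j
  rw [Matrix.mul_apply, Matrix.of_apply, Polynomial.eval_eq_sum_range' (hdeg j), sum_range]
  exact sum_congr rfl fun k _ => mul_comm _ _

theorem exists_natDegree_le_eval_eq_choose_add (M j : ℕ) :
    ∃ P : Polynomial K, P.natDegree ≤ M ∧ ∀ l : ℕ, P.eval (l : K) = ((l + j).choose M : ℕ) := by
  refine ⟨Polynomial.C (M.factorial : K)⁻¹ * Polynomial.taylor (j : K) (descPochhammer K M),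
    (Polynomial.natDegree_C_mul_le _ _).trans ?_, fun l => ?_⟩
  · rw [Polynomial.natDegree_taylor, descPochhammer_natDegree]
  · rw [Polynomial.eval_mul, Polynomial.eval_C, Polynomial.taylor_eval, ← Nat.cast_add,
      Nat.cast_choose_eq_descPochhammer_div, div_eq_inv_mul]

theorem det_choose_eq_div (l : Fin N → ℕ) :
    (Matrix.of fun i j : Fin N => ((l i + j).choose (N - 1) : K)).det =
      (Matrix.vandermonde fun i => (l i : K)).det /
        (Matrix.vandermonde fun i : Fin N => ((i.rev : ℕ) : K)).det := by
  choose P hP_deg hP_eval using exists_natDegree_le_eval_eq_choose_add (K := K) (N - 1)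
  let A : Matrix (Fin N) (Fin N) K := Matrix.of fun k j => (P j).coeff k
  have hfactor (l : Fin N → ℕ) :
      (Matrix.of fun i j : Fin N => ((l i + j).choose (N - 1) : K)).det =
        (Matrix.vandermonde fun i => (l i : K)).det * A.det := by
    have hdeg (j : Fin N) : (P j).natDegree < N :=
      (hP_deg j).trans_lt (by have := j.pos; omega)
    rw [← Matrix.det_mul, ← of_eval_eq_vandermonde_mul _ _ hdeg]
    simp only [hP_eval]
  have hrev : (Matrix.of fun i j : Fin N => (((i.rev : ℕ) + j).choose (N - 1) : K)).det = 1 := by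
    rw [Matrix.det_of_isUpperTriangular]
    · refine prod_eq_one fun i _ => ?_
      have hdiag : (i.rev : ℕ) + i = N - 1 := by
        rw [Fin.val_rev]
        omega
      rw [Matrix.of_apply, hdiag, Nat.choose_self, Nat.cast_one]
    · intro i j (hij : j < i)
      rw [Matrix.of_apply, Nat.choose_eq_zero_of_lt (by rw [Fin.val_rev]; omega), Nat.cast_zero]
  rw [hfactor] at hrev
  rw [hfactor l, eq_one_div_of_mul_eq_one_right hrev, mul_one_div]

end Det

section Average

theorem sum_psumPart_partition (α Y R : Type*) [Fintype α] [DecidableEq α] [Fintype Y]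
    [DecidableEq Y] [CommSemiring R] :
    ∑ σ : Equiv.Perm α, psumPart Y R σ.partition =
      (Fintype.card α).factorial • hsymm Y R (Fintype.card α) := by
  have prod_word (f : α → Y) :
      ∏ a, (X (f a) : MvPolynomial Y R) = ((wordContent f).1.map X).prod := by
    rw [wordContent, Multiset.map_map]
    rfl
  simp_rw [psumPart_partition_eq_sum_fixed, prod_word]
  exact sum_sum_comp_eq_self fun s => (s.1.map X).prod

theorem rename_fst_psumPart (ι κ R : Type*) [Fintype ι] [Fintype κ] [CommSemiring R] {n : ℕ}
    (μ : n.Partition) :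
    rename Prod.fst (psumPart (ι × κ) R μ) =
      Fintype.card κ ^ μ.parts.card • psumPart ι R μ := by
  have rename_psum (k : ℕ) :
      rename Prod.fst (psum (ι × κ) R k) = Fintype.card κ • psum ι R k := by
    simp only [psum, map_sum, map_pow, rename_X, Fintype.sum_prod_type, sum_const, card_univ,
      smul_sum]
  rw [psumPart, map_multiset_prod, Multiset.map_map]
  simp only [Function.comp_apply, rename_psum, psumPart, nsmul_eq_mul, Multiset.prod_map_mul,
    Multiset.map_const', Multiset.prod_replicate, Nat.cast_pow]

end Average

section Frobenius

variable {α : Type*} [Fintype α] [DecidableEq α] (σ : Equiv.Perm α)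

theorem parts_partition_eq_cycleType_add_replicate :
    σ.partition.parts =
      σ.cycleType + Multiset.replicate (Fintype.card α - σ.cycleType.sum) 1 := by
  rw [Equiv.Perm.parts_partition, Equiv.Perm.sum_cycleType]

theorem card_parts_partition :
    σ.partition.parts.card = σ.cycleType.card + (Fintype.card α - σ.cycleType.sum) := by
  rw [parts_partition_eq_cycleType_add_replicate, Multiset.card_add, Multiset.card_replicate]

theorem schurCoeff_psumPart_partition {N : ℕ} {R : Type*} [CommRing R] (lam : Fin N → ℕ) :
    schurCoeff lam (psumPart (Fin N) R σ.partition) =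
      coeff (Finsupp.equivFunOnFinite.symm fun i => lam i + (N - 1 - (i : ℕ)))
        ((∏ p : Fin N × Fin N with p.1 < p.2, (X p.1 - X p.2)) *
          ((σ.cycleType + Multiset.replicate (Fintype.card α - σ.cycleType.sum) 1).map
            fun k => ∑ i, X i ^ k).prod) := by
  have hstaircase : addStaircase lam = fun i => lam i + (N - 1 - (i : ℕ)) := by
    ext i
    rw [addStaircase, Fin.val_rev, Nat.sub_sub, Nat.add_comm 1]
  rw [← hstaircase, ← parts_partition_eq_cycleType_add_replicate]
  rfl

end Frobenius

section Weyl

variable {N : ℕ}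

theorem multichoose_tsub_rev_eq_choose (l : ℕ) (j : Fin N) :
    (if (j.rev : ℕ) ≤ l then N.multichoose (l - j.rev) else 0) = (l + j).choose (N - 1) := by
  have hj : (j.rev : ℕ) + j = N - 1 := by
    rw [Fin.val_rev]
    omega
  split_ifs with hle
  · rw [Nat.multichoose_eq, ← Nat.choose_symm_of_eq_add (b := N - 1)]
    · congr 1
      omega
    · omega
  · rw [Nat.choose_eq_zero_of_lt (by omega)]

theorem schurCoeff_rename_fst_hsymm {R : Type*} [CommRing R] (lam : Fin N → ℕ) :
    schurCoeff lam (rename Prod.fst (hsymm (Fin N × Fin N) R (∑ i, lam i))) =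
      (Matrix.of fun i j : Fin N => ((addStaircase lam i + j).choose (N - 1) : R)).det := by
  rw [schurCoeff_eq_det lam fun k => (N.multichoose k : R)]
  · congr 2
    ext i j
    rw [← multichoose_tsub_rev_eq_choose]
    push_cast
    rfl
  · intro m hm
    rw [← hm, ← Finsupp.degree_eq_sum, coeff_rename_fst_hsymm, Fintype.card_fin]

theorem vandermonde_addStaircase_div_vandermonde_rev {K : Type*} [Field K] (lam : Fin N → ℕ) :
    (Matrix.vandermonde fun i => (addStaircase lam i : K)).det /
        (Matrix.vandermonde fun i : Fin N => ((i.rev : ℕ) : K)).det =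
      ∏ p : Fin N × Fin N with p.1 < p.2,
        (((lam p.1 : K) - lam p.2 + (p.2 : ℕ) - (p.1 : ℕ)) / ((p.2 : ℕ) - (p.1 : ℕ))) := by
  have cast_rev (i : Fin N) : ((i.rev : ℕ) : K) = N - 1 - (i : ℕ) := by
    rw [Fin.val_rev, Nat.cast_sub i.2, Nat.cast_add_one, sub_sub, add_comm]
  rw [Matrix.det_vandermonde, Matrix.det_vandermonde, ← prod_filter_fst_lt_snd,
    ← prod_filter_fst_lt_snd fun i j => (((j.rev : ℕ) : K) - (i.rev : ℕ)), ← prod_div_distrib]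
  refine prod_congr rfl fun p _ => ?_
  rw [← neg_div_neg_eq, addStaircase, addStaircase, Nat.cast_add, Nat.cast_add, cast_rev, cast_rev]
  congr 1 <;> ring

end Weyl

theorem stmt_10_general {α : Type*} [Fintype α] [DecidableEq α] (K : Type*) [Field K] [CharZero K]
    {N : ℕ} (lam : Fin N → ℕ) (hsum : ∑ i, lam i = Fintype.card α) :
    (1 / ((Fintype.card α).factorial : K)) *
        ∑ σ : Equiv.Perm α,
          schurCoeff lam (psumPart (Fin N) K σ.partition) * (N : K) ^ σ.partition.parts.card =
      ∏ p : Fin N × Fin N with p.1 < p.2,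
        (((lam p.1 : K) - lam p.2 + (p.2 : ℕ) - (p.1 : ℕ)) / ((p.2 : ℕ) - (p.1 : ℕ))) := by
  have hterm (σ : Equiv.Perm α) :
      schurCoeff lam (psumPart (Fin N) K σ.partition) * (N : K) ^ σ.partition.parts.card =
        schurCoeff lam (rename Prod.fst (psumPart (Fin N × Fin N) K σ.partition)) := by
    rw [rename_fst_psumPart, Fintype.card_fin, map_nsmul, nsmul_eq_mul, Nat.cast_pow, mul_comm]
  have hfact : ((Fintype.card α).factorial : K) ≠ 0 := Nat.cast_ne_zero.2 (Nat.factorial_ne_zero _)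
  calc _ = 1 / ((Fintype.card α).factorial : K) *
        schurCoeff lam (rename Prod.fst (∑ σ : Equiv.Perm α,
          psumPart (Fin N × Fin N) K σ.partition)) := by
        simp only [hterm, map_sum]
    _ = schurCoeff lam (rename Prod.fst (hsymm (Fin N × Fin N) K (∑ i, lam i))) := by
        rw [sum_psumPart_partition, map_nsmul, map_nsmul, nsmul_eq_mul, one_div,
          inv_mul_cancel_left₀ hfact, hsum]
    _ = _ := by
        rw [schurCoeff_rename_fst_hsymm, det_choose_eq_div,
          vandermonde_addStaircase_div_vandermonde_rev]

/-- Dimension of the irreducible `U(N)`-representation with highest weight `λ`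
(a partition of `n` with at most `N` parts, encoded as a weakly decreasing function
`Fin N → ℕ` summing to `n`): by the Weyl dimension formula it equals
`∏_{i<j} (λ_i - λ_j + j - i)/(j-i)`, and the claim is that this equals
`(1/n!)·∑_{σ ∈ S_n} χ^λ(σ)·N^{#σ}` where `χ^λ` is the irreducible character of `S_n`
indexed by `λ` (given by the Frobenius character formula: `χ^λ(σ)` is the coefficient
of the monomial `x^{λ+δ}` in the product of the Vandermonde polynomial with the
power sums of the cycle type of `σ`), and `#σ` is the number of cycles of `σ`. -/
theorem stmt_10 (N n : ℕ) (hN : 1 ≤ N) (hn : 1 ≤ n)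
    (lam : Fin N → ℕ) (hdec : ∀ i j : Fin N, i ≤ j → lam j ≤ lam i)
    (hsum : ∑ i, lam i = n) :
    let delta : Fin N → ℕ := fun i => N - 1 - (i : ℕ)
    let pairs := Finset.univ.filter fun p : Fin N × Fin N => p.1 < p.2
    let vand : MvPolynomial (Fin N) ℚ := ∏ p ∈ pairs, (X p.1 - X p.2)
    let psum : ℕ → MvPolynomial (Fin N) ℚ := fun k => ∑ i, X i ^ k
    let fullCycleType : Equiv.Perm (Fin n) → Multiset ℕ := fun σ =>
      σ.cycleType + Multiset.replicate (n - σ.cycleType.sum) 1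
    let chi : Equiv.Perm (Fin n) → ℚ := fun σ =>
      coeff (Finsupp.equivFunOnFinite.symm fun i => lam i + delta i)
        (vand * ((fullCycleType σ).map psum).prod)
    let numCycles : Equiv.Perm (Fin n) → ℕ := fun σ =>
      σ.cycleType.card + (n - σ.cycleType.sum)
    (1 / (n.factorial : ℚ)) * ∑ σ : Equiv.Perm (Fin n), chi σ * (N : ℚ) ^ numCycles σ
      = ∏ p ∈ pairs,
        (((lam p.1 : ℚ) - (lam p.2 : ℚ) + ((p.2 : ℕ) : ℚ) - ((p.1 : ℕ) : ℚ)) /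
          (((p.2 : ℕ) : ℚ) - ((p.1 : ℕ) : ℚ))) := by
  simpa only [schurCoeff_psumPart_partition, card_parts_partition, Fintype.card_fin] using
    stmt_10_general (α := Fin n) ℚ lam (hsum.trans (Fintype.card_fin n).symm)
end

section
/- Under the Hall/Haar orthogonality: for partitions λ, μ with |λ| ≤ N, the power-sum functions p_λ(U) = ∏_i Tr(U^{λ_i}) on the unitary group U(N) satisfy ∫_{U(N)} p_λ(U)·conj(p_μ(U)) dU = δ_{λ,μ}·z_λ, where z_λ = ∏_{i ≥ 1} i^{m_i(λ)}·m_i(λ)! and m_i(λ) is the number of parts of λ equal to i. -/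
open MeasureTheory

/-!
Left invariance of the Haar measure makes the integral of every derivative along a vector field
`U ↦ a * U` vanish. Applied to `tr(B U ^ k) p_s(U) p_t(U⋆)` and summed over matrix units, this gives
a recursion for the moments `F s t = ∫ p_s(U) conj(p_t(U)) dU`, the loop equation

`N F(k ∪ s, t) + ∑_{0 < j < k} F(j ∪ (k - j) ∪ s, t) + ∑_{i ∈ s} i F((k + i) ∪ (s \ i), t)`
`  = ∑_{m ∈ t} m · (contraction of k with m)`.

The Hall pairing `δ_{st} z_s` satisfies it for every `N`: multiplication by `p_k` is adjoint to
`k ∂/∂p_k`, which turns each sum on the left into one part of the sum on the right. The difference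
`D` of two solutions that agree at `s = 0` vanishes for `|s| ≤ N` by induction on `|s|`: the right
side is then zero, and the `k - 1 + |s \ k| = |s| - 1 < N` remaining terms on the left, counted with
weights, are too few to balance `N D(s, t)` when `s` maximizes `‖D(s, t)‖` among partitions of
`|s|`.
-/

instance compactSpace_unitary {A : Type*} [NormedRing A] [StarRing A] [CStarRing A]
    [ProperSpace A] : CompactSpace (unitary A) := by
  refine isCompact_iff_compactSpace.mp
    ((isCompact_closedBall (0 : A) 1).of_isClosed_subset isClosed_unitary fun u hu => ?_)
  nontriviality A
  simp [CStarRing.norm_of_mem_unitary hu]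

theorem integrable_of_continuous_of_compactSpace {X E : Type*} [TopologicalSpace X]
    [CompactSpace X] [MeasurableSpace X] [OpensMeasurableSpace X] [NormedAddCommGroup E]
    {μ : Measure X} [IsFiniteMeasureOnCompacts μ] {f : X → E}
    (hf : Continuous f) : Integrable f μ :=
  hf.integrable_of_hasCompactSupport (.of_compactSpace f)

theorem integral_multiset_sum_map {X ι E : Type*} [MeasurableSpace X] {ν : Measure X}
    [NormedAddCommGroup E] [NormedSpace ℝ E] (t : Multiset ι) {f : ι → X → E}
    (hf : ∀ i ∈ t, Integrable (f i) ν) :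
    ∫ x, (t.map fun i => f i x).sum ∂ν = (t.map fun i => ∫ x, f i x ∂ν).sum := by
  classical
  simp only [Finset.sum_multiset_map_count, ← Nat.cast_smul_eq_nsmul ℝ]
  rw [integral_finsetSum _ fun i hi => (hf i (Multiset.mem_toFinset.mp hi)).fun_smul _]
  simp only [integral_smul]

section UnitaryIntegral

variable {A : Type*} [CStarAlgebra A] {E : Type*} [NormedAddCommGroup E] [NormedSpace ℂ E]

theorem hasDerivAt_expUnitary_smul (h : selfAdjoint A) (t : ℝ) :
    HasDerivAt (fun t : ℝ => (selfAdjoint.expUnitary (t • h) : A))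
      (Complex.I • (h : A) * selfAdjoint.expUnitary (t • h)) t := by
  simpa [smul_comm Complex.I] using hasDerivAt_exp_smul_const' (Complex.I • (h : A)) t

/-- The derivative at `U` of `U ↦ φ (U, U⋆)` along the right-invariant vector field `U ↦ a * U`.
Treating `U` and `U⋆` as independent arguments lets `φ` be holomorphic, so that any `a` is allowed;
for skew-adjoint `a` the curve `exp (t a) U` stays in the unitary group. -/
noncomputable def unitaryLieDeriv (φ : A × A → E) (a : A) (U : unitary A) : E :=
  fderiv ℂ φ (U, star (U : A)) (a * U, -(star (U : A) * a))

theorem continuous_unitaryLieDeriv {φ : A × A → E} (hφ : ContDiff ℂ 1 φ) (a : A) :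
    Continuous (unitaryLieDeriv φ a) := by
  have := hφ.continuous_fderiv one_ne_zero
  unfold unitaryLieDeriv
  fun_prop

theorem hasDerivAt_comp_expUnitary_smul_mul {φ : A × A → E} (hφ : Differentiable ℂ φ)
    (h : selfAdjoint A) (U : unitary A) (t : ℝ) :
    HasDerivAt (fun t : ℝ => φ (↑(selfAdjoint.expUnitary (t • h) * U),
        star ↑(selfAdjoint.expUnitary (t • h) * U)))
      (unitaryLieDeriv φ (Complex.I • (h : A)) (selfAdjoint.expUnitary (t • h) * U)) t := by
  have hV := (hasDerivAt_expUnitary_smul h t).mul_const (U : A)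
  refine ((hφ.differentiableAt.hasFDerivAt.restrictScalars ℝ).comp_hasDerivAt t
    (hV.prodMk hV.star)).congr_deriv ?_
  simp [unitaryLieDeriv, mul_assoc, h.2.star_eq]

variable [FiniteDimensional ℂ A]
  [MeasurableSpace (unitary A)] [BorelSpace (unitary A)]
  (μ : Measure (unitary A)) [IsFiniteMeasureOnCompacts μ] [μ.IsMulLeftInvariant]

theorem integral_unitaryLieDeriv_I_smul_eq_zero {φ : A × A → E} (hφ : ContDiff ℂ 1 φ)
    (h : selfAdjoint A) : ∫ U, unitaryLieDeriv φ (Complex.I • (h : A)) U ∂μ = 0 := by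
  have : ProperSpace A := FiniteDimensional.proper ℂ A
  have hφc : Continuous fun U : unitary A => φ (U, star (U : A)) :=
    hφ.continuous.comp (by fun_prop)
  have hDc := continuous_unitaryLieDeriv hφ (Complex.I • (h : A))
  have hint {f : unitary A → E} (hf : Continuous f) (t : ℝ) :
      Integrable (fun U => f (selfAdjoint.expUnitary (t • h) * U)) μ :=
    integrable_of_continuous_of_compactSpace (hf.comp (continuous_const_mul _))
  obtain ⟨C, hC⟩ := isCompact_univ.exists_bound_of_continuousOn hDc.continuousOn
  have hderiv := (hasDerivAt_integral_of_dominated_loc_of_deriv_le (μ := μ) (x₀ := (0 : ℝ))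
    (bound := fun _ => C) Filter.univ_mem
    (.of_forall fun t => (hint hφc t).aestronglyMeasurable) (hint hφc 0)
    (hint hDc 0).aestronglyMeasurable (.of_forall fun U t _ => hC _ trivial)
    (integrable_of_continuous_of_compactSpace continuous_const)
    (.of_forall fun U t _ =>
      hasDerivAt_comp_expUnitary_smul_mul (hφ.differentiable one_ne_zero) h U t)).2
  have hconst (t : ℝ) := integral_mul_left_eq_self (μ := μ)
    (fun U : unitary A => φ (U, star (U : A))) (selfAdjoint.expUnitary (t • h))
  rw [integral_mul_left_eq_self (unitaryLieDeriv φ (Complex.I • (h : A))), funext hconst] at hderiv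
  exact hderiv.unique (hasDerivAt_const _ _)

theorem integral_unitaryLieDeriv_eq_zero {φ : A × A → E} (hφ : ContDiff ℂ 1 φ) (a : A) :
    ∫ U, unitaryLieDeriv φ a U ∂μ = 0 := by
  have : ProperSpace A := FiniteDimensional.proper ℂ A
  have hsplit (U : unitary A) : unitaryLieDeriv φ a U =
      (-Complex.I) • unitaryLieDeriv φ (Complex.I • (realPart a : A)) U +
        unitaryLieDeriv φ (Complex.I • (imaginaryPart a : A)) U := by
    simp only [unitaryLieDeriv]
    rw [← map_smul, ← map_add]
    congr 1
    conv_lhs => rw [← realPart_add_I_smul_imaginaryPart a]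
    simp [smul_smul, add_mul, mul_add, add_comm]
  have hint (b : A) := integrable_of_continuous_of_compactSpace (μ := μ)
    (continuous_unitaryLieDeriv hφ b)
  simp_rw [hsplit]
  rw [integral_add ((hint _).fun_smul _) (hint _), integral_smul,
    integral_unitaryLieDeriv_I_smul_eq_zero μ hφ, integral_unitaryLieDeriv_I_smul_eq_zero μ hφ,
    smul_zero, add_zero]

end UnitaryIntegral

section TracePowerSum

variable {n R : Type*} [Fintype n] [DecidableEq n]

/-- The power sum `p_s(X) = ∏_{k ∈ s} tr(X ^ k)` in the eigenvalues of `X`, for a multiset `s` of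
exponents. -/
def tracePowerSum [CommSemiring R] (s : Multiset ℕ) (X : Matrix n n R) : R :=
  (s.map fun k => (X ^ k).trace).prod

theorem tracePowerSum_zero [CommSemiring R] (X : Matrix n n R) : tracePowerSum 0 X = 1 := by
  simp [tracePowerSum]

theorem tracePowerSum_cons [CommSemiring R] (k : ℕ) (s : Multiset ℕ) (X : Matrix n n R) :
    tracePowerSum (k ::ₘ s) X = (X ^ k).trace * tracePowerSum s X := by
  simp [tracePowerSum]

theorem tracePowerSum_star [CommSemiring R] [StarRing R] (s : Multiset ℕ) (X : Matrix n n R) :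
    tracePowerSum s (star X) = star (tracePowerSum s X) := by
  rw [← starRingEnd_apply (tracePowerSum s X), tracePowerSum, tracePowerSum, map_multiset_prod,
    Multiset.map_map]
  simp [starRingEnd_apply, ← Matrix.trace_conjTranspose, Matrix.star_eq_conjTranspose,
    Matrix.conjTranspose_pow]

/-- The gradient `∇p_s(X)` of `tracePowerSum s` with respect to the trace form: the derivative of
`p_s` at `X` in the direction `A` is `tr(A * ∇p_s(X))`, see `hasDerivAt_tracePowerSum`. -/
def tracePowerSumGrad [CommSemiring R] (s : Multiset ℕ) (X : Matrix n n R) : Matrix n n R :=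
  (s.map fun i : ℕ => (i * tracePowerSum (s.erase i) X) • X ^ (i - 1)).sum

theorem tracePowerSumGrad_mul [CommSemiring R] (s : Multiset ℕ) (X : Matrix n n R) :
    tracePowerSumGrad s X * X = X * tracePowerSumGrad s X := by
  simp only [tracePowerSumGrad, ← Multiset.sum_map_mul_left, ← Multiset.sum_map_mul_right,
    smul_mul_assoc, mul_smul_comm, pow_mul_comm']

theorem trace_mul_tracePowerSumGrad [CommSemiring R] (s : Multiset ℕ) (A X : Matrix n n R) :
    (A * tracePowerSumGrad s X).trace =
      (s.map fun i : ℕ => tracePowerSum (s.erase i) X * (i * (A * X ^ (i - 1)).trace)).sum := by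
  rw [tracePowerSumGrad, ← Multiset.sum_map_mul_left, ← Matrix.traceAddMonoidHom_apply,
    map_multiset_sum, Multiset.map_map]
  simp [mul_assoc, mul_left_comm]

theorem trace_mul_mul_tracePowerSumGrad [CommSemiring R] (s : Multiset ℕ) (A X : Matrix n n R) :
    (A * (X * tracePowerSumGrad s X)).trace =
      (s.map fun i : ℕ => i * ((A * X ^ i).trace * tracePowerSum (s.erase i) X)).sum := by
  rw [← mul_assoc, trace_mul_tracePowerSumGrad]
  congr 1
  refine Multiset.map_congr rfl fun i _ => ?_
  cases i with
  | zero => simp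
  | succ i => rw [Nat.add_sub_cancel, pow_succ', mul_assoc A]; ring

theorem sum_trace_single_mul_mul_single_mul [CommSemiring R] (X Y : Matrix n n R) :
    ∑ a, ∑ b, (Matrix.single b a (1 : R) * (X * Matrix.single a b 1 * Y)).trace =
      X.trace * Y.trace := by
  simp only [Matrix.trace_single_mul, one_smul]
  simp [Finset.sum_mul_sum, Matrix.trace, Matrix.mul_apply, Matrix.single_apply, ite_and]

theorem sum_trace_single_mul_mul_trace_single_mul [CommSemiring R] (X Y : Matrix n n R) :
    ∑ a, ∑ b, (Matrix.single b a (1 : R) * X).trace * (Matrix.single a b 1 * Y).trace =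
      (X * Y).trace := by
  simp only [Matrix.trace_single_mul, one_smul]
  simp [Matrix.trace, Matrix.mul_apply]

end TracePowerSum

section Calculus

open scoped Matrix.Norms.L2Operator

variable {n 𝕜 : Type*} [Fintype n] [DecidableEq n] [RCLike 𝕜]

theorem contDiff_trace {m : WithTop ℕ∞} : ContDiff 𝕜 m (Matrix.trace : Matrix n n 𝕜 → 𝕜) :=
  (Matrix.traceLinearMap n 𝕜 𝕜).toContinuousLinearMap.contDiff

theorem contDiff_tracePowerSum {m : WithTop ℕ∞} (s : Multiset ℕ) :
    ContDiff 𝕜 m (tracePowerSum s : Matrix n n 𝕜 → 𝕜) := by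
  induction s using Multiset.induction with
  | empty => simpa only [funext tracePowerSum_zero] using contDiff_const
  | cons k s ih =>
    simp only [funext (tracePowerSum_cons k s)]
    exact (contDiff_trace.comp (contDiff_id.pow k)).mul ih

@[fun_prop]
theorem continuous_tracePowerSum (s : Multiset ℕ) :
    Continuous (tracePowerSum s : Matrix n n 𝕜 → 𝕜) :=
  (contDiff_tracePowerSum (m := 0) s).continuous

variable {X : 𝕜 → Matrix n n 𝕜} {X' : Matrix n n 𝕜} {z : 𝕜}

theorem hasDerivAt_trace_mul_pow (B : Matrix n n 𝕜) (hX : HasDerivAt X X' z) (k : ℕ) :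
    HasDerivAt (fun z => (B * X z ^ k).trace)
      (∑ j ∈ Finset.range k, (B * (X z ^ j * X' * X z ^ (k - 1 - j))).trace) z := by
  have htrace := (Matrix.traceLinearMap n 𝕜 𝕜).toContinuousLinearMap.hasFDerivAt.comp_hasDerivAt z
    ((hX.fun_pow' k).const_mul B)
  refine htrace.congr_deriv ?_
  rw [← Finset.sum_range_reflect]
  simp only [Nat.pred_eq_sub_one, Finset.mul_sum, map_sum, LinearMap.coe_toContinuousLinearMap',
    Matrix.traceLinearMap_apply]
  refine Finset.sum_congr rfl fun j hj => ?_
  rw [Nat.sub_sub_self (by have := Finset.mem_range.mp hj; lia)]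

theorem hasDerivAt_trace_pow (hX : HasDerivAt X X' z) (k : ℕ) :
    HasDerivAt (fun z => (X z ^ k).trace) (k * (X' * X z ^ (k - 1)).trace) z := by
  have hcyclic : ∀ j ∈ Finset.range k,
      (1 * (X z ^ j * X' * X z ^ (k - 1 - j))).trace = (X' * X z ^ (k - 1)).trace := by
    intro j hj
    rw [one_mul, mul_assoc, Matrix.trace_mul_comm, mul_assoc, ← pow_add,
      Nat.sub_add_cancel (by have := Finset.mem_range.mp hj; lia)]
  convert hasDerivAt_trace_mul_pow 1 hX k using 1
  · simp
  · rw [Finset.sum_congr rfl hcyclic, Finset.sum_const, Finset.card_range, nsmul_eq_mul]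

theorem hasDerivAt_tracePowerSum (hX : HasDerivAt X X' z) (s : Multiset ℕ) :
    HasDerivAt (fun z => tracePowerSum s (X z)) (X' * tracePowerSumGrad s (X z)).trace z := by
  have := (HasFDerivAt.multiset_prod (u := s) (g := fun k z => (X z ^ k).trace) fun k _ =>
    (hasDerivAt_trace_pow hX k).hasFDerivAt).hasDerivAt
  refine this.congr_deriv ?_
  rw [trace_mul_tracePowerSumGrad, ← ContinuousLinearMap.apply_apply (v := (1 : 𝕜)),
    map_multiset_sum, Multiset.map_map]
  simp [tracePowerSum]

end Calculus

section LoopEquation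

variable {R : Type*}

/-- What `p_k(U) p_s(U) conj(p_m(U) p_t(U))` turns into when its factors indexed by `k` and `m` are
contracted to `tr(U ^ k (U⋆) ^ m)`, where `F s t` stands for `p_s(U) conj(p_t(U))`: for unitary
`N × N` matrices that trace is `N`, `tr(U ^ (k - m))` or `tr((U⋆) ^ (m - k))`. -/
def loopContraction [CommSemiring R] (N : R) (F : Multiset ℕ → Multiset ℕ → R) (k m : ℕ)
    (s t : Multiset ℕ) : R :=
  if m = k then N * F s t else if m < k then F ((k - m) ::ₘ s) t else F s ((m - k) ::ₘ t)

/-- The loop (Schwinger–Dyson) equations of the unitary group `U(N)`, satisfied by the joint moments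
`F s t = ∫ p_s(U) conj(p_t(U)) dU`. On the left, the loop `k` is cut in two and joined with the
loops of `s`; on the right, it is contracted with the loops of `t`. Exponents `0` are excluded
because `p_0(U) = N` is the constant that appears as the coefficient `N`. -/
def LoopEquation [CommSemiring R] (N : R) (F : Multiset ℕ → Multiset ℕ → R) : Prop :=
  ∀ ⦃k : ℕ⦄ ⦃s t : Multiset ℕ⦄, 0 < k → 0 ∉ s → 0 ∉ t →
    N * F (k ::ₘ s) t + ∑ j ∈ Finset.Ico 1 k, F (j ::ₘ (k - j) ::ₘ s) t
        + (s.map fun i : ℕ => (i : R) * F ((k + i) ::ₘ s.erase i) t).sum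
      = (t.map fun m : ℕ => (m : R) * loopContraction N F k m s (t.erase m)).sum

theorem LoopEquation.sub [CommRing R] {N : R} {F G : Multiset ℕ → Multiset ℕ → R}
    (hF : LoopEquation N F) (hG : LoopEquation N G) : LoopEquation N (F - G) := by
  intro k s t hk hs ht
  have hcontr (m : ℕ) (t' : Multiset ℕ) : loopContraction N (F - G) k m s t' =
      loopContraction N F k m s t' - loopContraction N G k m s t' := by
    simp only [loopContraction, Pi.sub_apply]
    split_ifs <;> ring
  simp only [hcontr, Pi.sub_apply, mul_sub, Finset.sum_sub_distrib, Multiset.sum_map_sub]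
  linear_combination hF hk hs ht - hG hk hs ht

theorem loopContraction_eq_zero [CommSemiring R] {N : R} {F : Multiset ℕ → Multiset ℕ → R}
    {k m : ℕ} {s t : Multiset ℕ} (hm : 0 < m) (hs : 0 ∉ s) (ht : 0 ∉ t) (hk : 0 < k)
    (hF : ∀ u v, 0 ∉ u → 0 ∉ v → u.sum < k + s.sum → F u v = 0) :
    loopContraction N F k m s t = 0 := by
  unfold loopContraction
  split_ifs with h_eq h_lt
  · rw [hF s t hs ht (by lia), mul_zero]
  · exact hF _ _ (by simp [hs]; lia) ht (by simp; lia)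
  · exact hF _ _ hs (by simp [ht]; lia) (by lia)

variable {𝕜 : Type*} [RCLike 𝕜] {N : ℕ} {D : Multiset ℕ → Multiset ℕ → 𝕜}

theorem norm_sum_map_natCast_mul_le {s : Multiset ℕ} {f : ℕ → 𝕜} {C : ℝ}
    (hf : ∀ i ∈ s, ‖f i‖ ≤ C) : ‖(s.map fun i : ℕ => (i : 𝕜) * f i).sum‖ ≤ s.sum * C := by
  induction s using Multiset.induction with
  | empty => simp
  | cons a s ih =>
    simp only [Multiset.mem_cons, forall_eq_or_imp, Multiset.map_cons, Multiset.sum_cons] at hf ⊢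
    calc _ ≤ ‖(a : 𝕜) * f a‖ + ‖(s.map fun i : ℕ => (i : 𝕜) * f i).sum‖ := norm_add_le _ _
      _ ≤ a * C + s.sum * C := by
        rw [norm_mul, RCLike.norm_natCast]
        gcongr
        exacts [hf.1, ih hf.2]
      _ = _ := by push_cast; ring

theorem LoopEquation.norm_cons_le (hD : LoopEquation (N : 𝕜) D) {k : ℕ} {s t : Multiset ℕ}
    {C : ℝ} (hk : 0 < k) (hs : 0 ∉ s) (ht : 0 ∉ t)
    (hzero : ∀ u v, 0 ∉ u → 0 ∉ v → u.sum < k + s.sum → D u v = 0)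
    (hC : ∀ u, 0 ∉ u → u.sum = k + s.sum → ‖D u t‖ ≤ C) :
    N * ‖D (k ::ₘ s) t‖ ≤ (k + s.sum - 1) * C := by
  have hcontr :
      (t.map fun m : ℕ => (m : 𝕜) * loopContraction (N : 𝕜) D k m s (t.erase m)).sum = 0 := by
    refine Multiset.sum_eq_zero fun x hx => ?_
    obtain ⟨m, hm, rfl⟩ := Multiset.mem_map.mp hx
    rw [loopContraction_eq_zero (Nat.pos_of_ne_zero (by rintro rfl; exact ht hm)) hs
      (fun h => ht (Multiset.mem_of_mem_erase h)) hk hzero, mul_zero]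
  have hloop : (N : 𝕜) * D (k ::ₘ s) t =
      -(∑ j ∈ Finset.Ico 1 k, D (j ::ₘ (k - j) ::ₘ s) t
        + (s.map fun i : ℕ => (i : 𝕜) * D ((k + i) ::ₘ s.erase i) t).sum) := by
    linear_combination hD hk hs ht + hcontr
  have hcut : ‖∑ j ∈ Finset.Ico 1 k, D (j ::ₘ (k - j) ::ₘ s) t‖ ≤ (k - 1 : ℝ) * C := by
    refine (norm_sum_le_of_le _ fun j hj => ?_).trans_eq
      (by rw [Finset.sum_const, Nat.card_Ico, nsmul_eq_mul, Nat.cast_pred hk])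
    have := Finset.mem_Ico.mp hj
    exact hC _ (by simp [hs]; lia) (by simp; lia)
  have hjoin : ‖(s.map fun i : ℕ => (i : 𝕜) * D ((k + i) ::ₘ s.erase i) t).sum‖ ≤ s.sum * C := by
    refine norm_sum_map_natCast_mul_le fun i hi => hC _ ?_ ?_
    · simp only [Multiset.mem_cons, not_or]
      exact ⟨by lia, fun h => hs (Multiset.mem_of_mem_erase h)⟩
    · rw [Multiset.sum_cons, add_assoc, Multiset.sum_erase hi]
  calc N * ‖D (k ::ₘ s) t‖ = ‖(N : 𝕜) * D (k ::ₘ s) t‖ := by rw [norm_mul, RCLike.norm_natCast]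
    _ ≤ (k - 1) * C + s.sum * C := by
      rw [hloop, norm_neg]
      exact norm_add_le_of_le hcut hjoin
    _ = (k + s.sum - 1) * C := by ring

theorem LoopEquation.eq_zero (hD : LoopEquation (N : 𝕜) D) (hnil : ∀ t, 0 ∉ t → D 0 t = 0)
    {s t : Multiset ℕ} (hsN : s.sum ≤ N) (hs : 0 ∉ s) (ht : 0 ∉ t) : D s t = 0 := by
  induction hn : s.sum using Nat.strong_induction_on generalizing s t with
  | _ n ih =>
  subst hn
  obtain ⟨p, hp⟩ := Finite.exists_max fun p : s.sum.Partition => ‖D p.parts t‖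
  have hle (u : Multiset ℕ) (hu : 0 ∉ u) (hsum : u.sum = s.sum) : ‖D u t‖ ≤ ‖D p.parts t‖ :=
    hp ⟨u, fun {i} hi => Nat.pos_of_ne_zero (by rintro rfl; exact hu hi), hsum⟩
  suffices hmax : D p.parts t = 0 by
    simpa [hmax] using hle s hs rfl
  have hparts : 0 ∉ p.parts := fun h => (p.parts_pos h).false
  have hpsum := p.parts_sum
  obtain hp0 | ⟨k, hk⟩ := p.parts.empty_or_exists_mem
  · rw [hp0, hnil t ht]
  obtain ⟨r, hr⟩ := Multiset.exists_cons_of_mem hk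
  rw [hr] at hparts hpsum hle ⊢
  simp only [Multiset.mem_cons, not_or, Multiset.sum_cons] at hparts hpsum
  have hbound := hD.norm_cons_le (p.parts_pos hk) hparts.2 ht
    (fun u v hu hv hlt => ih _ (by lia) (by lia) hu hv rfl) (hpsum ▸ hle)
  have hN : (k + r.sum : ℝ) ≤ N := mod_cast hpsum.trans_le hsN
  rw [← norm_le_zero_iff]
  nlinarith [norm_nonneg (D (k ::ₘ r) t)]

end LoopEquation

section HallPairing

/-- The number `z_λ = ∏ i ^ m_i(λ) m_i(λ)!` attached to the partition `λ` with parts `s`, which is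
the order of the centralizer of a permutation of cycle type `λ`. -/
def zLabel (s : Multiset ℕ) : ℕ := s.prod * ∏ i ∈ s.toFinset, (s.count i).factorial

theorem zLabel_cons (k : ℕ) (s : Multiset ℕ) :
    zLabel (k ::ₘ s) = (s.count k + 1) * k * zLabel s := by
  have hcons : ∏ i ∈ (k ::ₘ s).toFinset, ((k ::ₘ s).count i).factorial =
      (s.count k + 1).factorial * ∏ i ∈ s.toFinset.erase k, (s.count i).factorial := by
    rw [← Finset.mul_prod_erase _ _ (show k ∈ (k ::ₘ s).toFinset by simp),
      Multiset.count_cons_self, Multiset.toFinset_cons, Finset.erase_insert_eq_erase]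
    congr 1
    exact Finset.prod_congr rfl fun i hi => by
      rw [Multiset.count_cons_of_ne (Finset.ne_of_mem_erase hi)]
  have hself : ∏ i ∈ s.toFinset, (s.count i).factorial =
      (s.count k).factorial * ∏ i ∈ s.toFinset.erase k, (s.count i).factorial := by
    by_cases hk : k ∈ s.toFinset
    · rw [← Finset.mul_prod_erase _ _ hk]
    · rw [Finset.erase_eq_of_notMem hk, Multiset.count_eq_zero_of_notMem (by simpa using hk),
        Nat.factorial_zero, one_mul]
  rw [zLabel, zLabel, hcons, hself, Multiset.prod_cons, Nat.factorial_succ]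
  ring

variable {R : Type*} [CommSemiring R]

/-- The Hall inner product `⟨p_s, p_t⟩ = δ_{st} z_s` of the power-sum symmetric functions. -/
def hallPairing (s t : Multiset ℕ) : R := if s = t then zLabel s else 0

theorem hallPairing_comm (s t : Multiset ℕ) : (hallPairing s t : R) = hallPairing t s := by
  grind [hallPairing]

theorem hallPairing_cons_left (k : ℕ) (s t : Multiset ℕ) :
    (hallPairing (k ::ₘ s) t : R) =
      (t.map fun m : ℕ => if m = k then (m : R) * hallPairing s (t.erase m) else 0).sum := by
  rw [Multiset.sum_map_eq_nsmul_single k (fun m hm _ => if_neg hm), if_pos rfl, nsmul_eq_mul]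
  by_cases hk : k ∈ t
  · obtain ⟨t, rfl⟩ := Multiset.exists_cons_of_mem hk
    by_cases hst : s = t
    · subst hst
      simp only [hallPairing, zLabel_cons, Multiset.erase_cons_head,
        Multiset.count_cons_self, if_true]
      push_cast
      ring
    · simp [hallPairing, hst]
  · have hne : k ::ₘ s ≠ t := by rintro rfl; simp at hk
    simp [hallPairing, hne, Multiset.count_eq_zero_of_notMem hk]

theorem sum_hallPairing_cut {k : ℕ} {s t : Multiset ℕ} (ht : 0 ∉ t) :
    ∑ j ∈ Finset.Ico 1 k, (hallPairing (j ::ₘ (k - j) ::ₘ s) t : R) =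
      (t.map fun m : ℕ =>
        if m < k then (m : R) * hallPairing ((k - m) ::ₘ s) (t.erase m) else 0).sum := by
  simp_rw [fun j => hallPairing_cons_left (R := R) j ((k - j) ::ₘ s) t]
  rw [Finset.sum_eq_multiset_sum, Multiset.sum_map_sum_map]
  congr 1
  refine Multiset.map_congr rfl fun m hm => ?_
  have hm0 : 1 ≤ m := Nat.pos_of_ne_zero (by rintro rfl; exact ht hm)
  rw [← Finset.sum_eq_multiset_sum, Finset.sum_ite_eq]
  simp [hm0]

theorem sum_hallPairing_join {k : ℕ} {s t : Multiset ℕ} (hs : 0 ∉ s) :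
    (s.map fun i : ℕ => (i : R) * hallPairing ((k + i) ::ₘ s.erase i) t).sum =
      (t.map fun m : ℕ =>
        if k < m then (m : R) * hallPairing s ((m - k) ::ₘ t.erase m) else 0).sum := by
  have hleft (i : ℕ) : (i : R) * hallPairing ((k + i) ::ₘ s.erase i) t = (t.map fun m : ℕ =>
      if m = k + i then (i * m : R) * hallPairing (s.erase i) (t.erase m) else 0).sum := by
    simp [hallPairing_cons_left, ← Multiset.sum_map_mul_left, mul_assoc]
  have hright (m : ℕ) : (if k < m then (m : R) * hallPairing s ((m - k) ::ₘ t.erase m) else 0) =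
      (s.map fun i : ℕ =>
        if m = k + i then (i * m : R) * hallPairing (s.erase i) (t.erase m) else 0).sum := by
    rw [hallPairing_comm, hallPairing_cons_left, ← Multiset.sum_map_mul_left]
    split_ifs with hkm
    · congr 1
      refine Multiset.map_congr rfl fun i _ => ?_
      rw [hallPairing_comm]
      by_cases h : m = k + i
      · rw [if_pos h, if_pos (by lia)]
        ring
      · rw [if_neg h, if_neg (by lia), mul_zero]
    · refine (Multiset.sum_eq_zero fun x hx => ?_).symm
      obtain ⟨i, hi, rfl⟩ := Multiset.mem_map.mp hx
      have hi0 : i ≠ 0 := by rintro rfl; exact hs hi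
      exact if_neg (by lia)
  simp only [hleft, hright]
  exact Multiset.sum_map_sum_map ..

theorem loopEquation_hallPairing (N : R) : LoopEquation N hallPairing := by
  intro k s t _ hs ht
  rw [hallPairing_cons_left, sum_hallPairing_cut ht, sum_hallPairing_join hs,
    ← Multiset.sum_map_mul_left, ← Multiset.sum_map_add, ← Multiset.sum_map_add]
  congr 1
  refine Multiset.map_congr rfl fun m _ => ?_
  rcases lt_trichotomy m k with h | rfl | h
  · simp [loopContraction, h, h.ne, h.not_gt]
  · simp [loopContraction, mul_left_comm]
  · simp [loopContraction, h, h.ne', h.not_gt]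

end HallPairing

section LoopTest

open scoped Matrix.Norms.L2Operator

variable {n : Type*} [Fintype n] [DecidableEq n]

/-- The function `tr(B X ^ k) p_s(X) p_t(Y)` of `Z = (X, Y)`, evaluated at `(U, U⋆)`. Its Lie
derivatives along matrix units, with matrix units for `B`, add up to the loop equation. -/
def loopTest (B : Matrix n n ℂ) (k : ℕ) (s t : Multiset ℕ) (Z : Matrix n n ℂ × Matrix n n ℂ) : ℂ :=
  (B * Z.1 ^ k).trace * (tracePowerSum s Z.1 * tracePowerSum t Z.2)

theorem contDiff_loopTest {m : WithTop ℕ∞} (B : Matrix n n ℂ) (k : ℕ) (s t : Multiset ℕ) :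
    ContDiff ℂ m (loopTest B k s t) :=
  (contDiff_trace.comp (contDiff_const.mul (contDiff_fst.pow k))).mul
    (((contDiff_tracePowerSum s).comp contDiff_fst).mul
      ((contDiff_tracePowerSum t).comp contDiff_snd))

theorem unitaryLieDeriv_loopTest (A B : Matrix n n ℂ) (k : ℕ) (s t : Multiset ℕ)
    (U : Matrix.unitaryGroup n ℂ) :
    unitaryLieDeriv (loopTest B k s t) A U =
      (∑ j ∈ Finset.range k, (B * (U.1 ^ j * A * U.1 ^ (k - j))).trace)
          * (tracePowerSum s U.1 * tracePowerSum t (star U.1))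
        + (B * U.1 ^ k).trace * (A * (U.1 * tracePowerSumGrad s U.1)).trace
          * tracePowerSum t (star U.1)
        - (B * U.1 ^ k).trace * (A * (star U.1 * tracePowerSumGrad t (star U.1))).trace
          * tracePowerSum s U.1 := by
  have hline (X V : Matrix n n ℂ) : HasDerivAt (fun z : ℂ => X + z • V) V 0 := by
    simpa using ((hasDerivAt_id (0 : ℂ)).smul_const V).const_add X
  have hX := hline U.1 (A * U.1)
  have hY := hline (star U.1) (-(star U.1 * A))
  have hderiv : HasLineDerivAt ℂ (loopTest B k s t) _ (U.1, star U.1) (A * U.1, -(star U.1 * A)) :=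
    (hasDerivAt_trace_mul_pow B hX k).mul
      ((hasDerivAt_tracePowerSum hX s).mul (hasDerivAt_tracePowerSum hY t))
  rw [unitaryLieDeriv, ← ((contDiff_loopTest B k s t).differentiable
    one_ne_zero).differentiableAt.lineDeriv_eq_fderiv, hderiv.lineDeriv]
  have hpow : ∀ j ∈ Finset.range k, (B * (U.1 ^ j * (A * U.1) * U.1 ^ (k - 1 - j))).trace =
      (B * (U.1 ^ j * A * U.1 ^ (k - j))).trace := by
    intro j hj
    have := Finset.mem_range.mp hj
    rw [← mul_assoc (U.1 ^ j), mul_assoc _ U.1, ← pow_succ', show k - 1 - j + 1 = k - j by lia]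
  have hcomm : (star U.1 * A * tracePowerSumGrad t (star U.1)).trace =
      (A * (star U.1 * tracePowerSumGrad t (star U.1))).trace := by
    rw [mul_assoc, Matrix.trace_mul_comm, mul_assoc, tracePowerSumGrad_mul]
  simp only [zero_smul, add_zero, neg_mul, Matrix.trace_neg, hcomm, mul_assoc A,
    Finset.sum_congr rfl hpow]
  ring

theorem sum_unitaryLieDeriv_loopTest (k : ℕ) (s t : Multiset ℕ) (U : Matrix.unitaryGroup n ℂ) :
    ∑ a, ∑ b, unitaryLieDeriv (loopTest (Matrix.single b a 1) k s t) (Matrix.single a b 1) U =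
      ∑ j ∈ Finset.range k, tracePowerSum (j ::ₘ (k - j) ::ₘ s) U.1 * tracePowerSum t (star U.1)
        + (s.map fun i : ℕ =>
            i * (tracePowerSum ((k + i) ::ₘ s.erase i) U.1 * tracePowerSum t (star U.1))).sum
        - (t.map fun m : ℕ => m * ((U.1 ^ k * star U.1 ^ m).trace *
            (tracePowerSum s U.1 * tracePowerSum (t.erase m) (star U.1)))).sum := by
  have hcut : ∑ a, ∑ b, ∑ j ∈ Finset.range k, (Matrix.single b a (1 : ℂ) *
      (U.1 ^ j * Matrix.single a b 1 * U.1 ^ (k - j))).trace =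
      ∑ j ∈ Finset.range k, (U.1 ^ j).trace * (U.1 ^ (k - j)).trace := by
    simp only [← sum_trace_single_mul_mul_single_mul]
    simp only [Finset.sum_comm (t := Finset.range k)]
  simp only [unitaryLieDeriv_loopTest, Finset.sum_sub_distrib, Finset.sum_add_distrib,
    ← Finset.sum_mul, hcut, sum_trace_single_mul_mul_trace_single_mul]
  simp only [trace_mul_mul_tracePowerSumGrad, ← pow_add, ← Multiset.sum_map_mul_right,
    Finset.sum_mul, tracePowerSum_cons, mul_assoc, mul_comm (tracePowerSum (t.erase _) _)]

end LoopTest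

section UnitaryMoment

open scoped Matrix.Norms.L2Operator

variable {n : Type*} [Fintype n] [DecidableEq n]

theorem trace_unitary_pow_mul_star_pow {R : Type*} [CommRing R] [StarRing R]
    (U : Matrix.unitaryGroup n R) (k m : ℕ) :
    (U.1 ^ k * star U.1 ^ m).trace =
      if m = k then (Fintype.card n : R)
      else if m < k then (U.1 ^ (k - m)).trace else (star U.1 ^ (m - k)).trace := by
  have hcancel (j : ℕ) : U.1 ^ j * star U.1 ^ j = 1 := by
    rw [← star_pow]
    exact Unitary.mul_star_self_of_mem (pow_mem U.2 j)
  rcases lt_trichotomy m k with h | rfl | h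
  · rw [if_neg h.ne, if_pos h, ← Nat.sub_add_cancel h.le, pow_add, mul_assoc, hcancel, mul_one,
      Nat.add_sub_cancel]
  · rw [if_pos rfl, hcancel, Matrix.trace_one]
  · rw [if_neg h.ne', if_neg h.not_gt, ← Nat.add_sub_cancel' h.le, pow_add, ← mul_assoc, hcancel,
      one_mul, Nat.add_sub_cancel_left]

variable [MeasurableSpace (Matrix.unitaryGroup n ℂ)]
  (μ : Measure (Matrix.unitaryGroup n ℂ))

/-- The joint moment `∫ p_s(U) p_t(U⋆) dμ(U)` of traces of powers of a random unitary matrix. -/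
noncomputable def unitaryMoment (s t : Multiset ℕ) : ℂ :=
  ∫ U, tracePowerSum s U.1 * tracePowerSum t (star U.1) ∂μ

theorem unitaryMoment_zero_cons_left (s t : Multiset ℕ) :
    unitaryMoment μ (0 ::ₘ s) t = Fintype.card n * unitaryMoment μ s t := by
  simp [unitaryMoment, tracePowerSum_cons, mul_assoc, integral_const_mul]

theorem integral_trace_pow_mul_star_pow (k m : ℕ) (s t : Multiset ℕ) :
    ∫ U, (U.1 ^ k * star U.1 ^ m).trace * (tracePowerSum s U.1 * tracePowerSum t (star U.1)) ∂μ =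
      loopContraction (Fintype.card n : ℂ) (unitaryMoment μ) k m s t := by
  simp only [trace_unitary_pow_mul_star_pow, loopContraction, unitaryMoment]
  split_ifs
  · rw [integral_const_mul]
  · simp only [tracePowerSum_cons, mul_assoc]
  · simp only [tracePowerSum_cons, mul_left_comm]

variable [BorelSpace (Matrix.unitaryGroup n ℂ)] [IsFiniteMeasureOnCompacts μ]
  [μ.IsMulLeftInvariant]

theorem sum_unitaryMoment_eq_sum_loopContraction (k : ℕ) (s t : Multiset ℕ) :
    ∑ j ∈ Finset.range k, unitaryMoment μ (j ::ₘ (k - j) ::ₘ s) t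
        + (s.map fun i : ℕ => (i : ℂ) * unitaryMoment μ ((k + i) ::ₘ s.erase i) t).sum =
      (t.map fun m : ℕ =>
        m * loopContraction (Fintype.card n : ℂ) (unitaryMoment μ) k m s (t.erase m)).sum := by
  have hint (f : Matrix.unitaryGroup n ℂ → ℂ) (hf : Continuous f) : Integrable f μ :=
    integrable_of_continuous_of_compactSpace hf
  have hzero : ∫ U, ∑ a, ∑ b,
      unitaryLieDeriv (loopTest (Matrix.single b a 1) k s t) (Matrix.single a b 1) U ∂μ = 0 := by
    have hcont (a b : n) := continuous_unitaryLieDeriv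
      (contDiff_loopTest (Matrix.single b a 1) k s t) (Matrix.single a b 1)
    rw [integral_finsetSum _ fun a _ => hint _ (by fun_prop)]
    refine Finset.sum_eq_zero fun a _ => ?_
    rw [integral_finsetSum _ fun b _ => hint _ (by fun_prop)]
    exact Finset.sum_eq_zero fun b _ => integral_unitaryLieDeriv_eq_zero μ (contDiff_loopTest ..) _
  simp only [sum_unitaryLieDeriv_loopTest] at hzero
  rw [integral_sub (hint _ (by fun_prop)) (hint _ (by fun_prop)),
    integral_add (hint _ (by fun_prop)) (hint _ (by fun_prop)),
    integral_finsetSum _ fun _ _ => hint _ (by fun_prop),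
    integral_multiset_sum_map _ fun _ _ => hint _ (by fun_prop),
    integral_multiset_sum_map _ fun _ _ => hint _ (by fun_prop)] at hzero
  simp only [integral_const_mul, integral_trace_pow_mul_star_pow] at hzero
  exact sub_eq_zero.mp hzero

theorem loopEquation_unitaryMoment : LoopEquation (Fintype.card n : ℂ) (unitaryMoment μ) := by
  intro k s t hk _ _
  rw [← unitaryMoment_zero_cons_left, ← sum_unitaryMoment_eq_sum_loopContraction,
    Finset.range_eq_Ico, Finset.sum_eq_sum_Ico_succ_bot hk, Nat.sub_zero]

theorem unitaryMoment_zero_left {t : Multiset ℕ} (ht : 0 ∉ t) :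
    unitaryMoment μ 0 t = if t = 0 then (μ.real Set.univ : ℂ) else 0 := by
  split_ifs with h
  · simp [h, unitaryMoment, tracePowerSum_zero]
  -- The case `k = 0` of the loop identity expresses invariance under `U ↦ exp(iθ) U`.
  have hdegree : (t.sum : ℂ) * unitaryMoment μ 0 t = 0 := by
    have hcontr : ∀ m ∈ t, (m : ℂ) * loopContraction (Fintype.card n : ℂ) (unitaryMoment μ) 0 m 0
        (t.erase m) = m * unitaryMoment μ 0 t := by
      intro m hm
      have hm0 : m ≠ 0 := by rintro rfl; exact ht hm
      simp [loopContraction, hm0, Multiset.cons_erase hm]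
    have hloop := sum_unitaryMoment_eq_sum_loopContraction μ 0 0 t
    rw [Multiset.map_congr rfl hcontr, Multiset.sum_map_mul_right] at hloop
    simpa [Nat.cast_multiset_sum] using hloop.symm
  obtain ⟨m, hm⟩ := Multiset.exists_mem_of_ne_zero h
  have hsum : t.sum ≠ 0 := fun h0 => ht (Multiset.sum_eq_zero_iff.mp h0 m hm ▸ hm)
  exact (mul_eq_zero.mp hdegree).resolve_left (Nat.cast_ne_zero.mpr hsum)

end UnitaryMoment

theorem stmt_15_general {n : Type*} [Fintype n] [DecidableEq n]
    [MeasurableSpace (Matrix.unitaryGroup n ℂ)] [BorelSpace (Matrix.unitaryGroup n ℂ)]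
    (μ : Measure (Matrix.unitaryGroup n ℂ)) [IsProbabilityMeasure μ] [μ.IsMulLeftInvariant]
    {s t : Multiset ℕ} (hs : 0 ∉ s) (ht : 0 ∉ t) (hsn : s.sum ≤ Fintype.card n) :
    ∫ U, tracePowerSum s U.1 * (starRingEnd ℂ) (tracePowerSum t U.1) ∂μ = hallPairing s t := by
  simp only [starRingEnd_apply, ← tracePowerSum_star]
  have hloop := (loopEquation_unitaryMoment μ).sub (loopEquation_hallPairing _)
  have hzero (u : Multiset ℕ) (hu : 0 ∉ u) : unitaryMoment μ 0 u = hallPairing 0 u := by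
    simp [unitaryMoment_zero_left μ hu, hallPairing, zLabel, eq_comm]
  exact sub_eq_zero.mp (hloop.eq_zero (fun u hu => sub_eq_zero.mpr (hzero u hu)) hsn hs ht)

/-- Haar orthogonality of power-sum functions on `U(N)`: for partitions `λ, μ`
(multisets of positive integers) with `|λ| ≤ N`, and `μHaar` the normalized Haar
(probability) measure on the unitary group,
`∫ p_λ(U)·conj(p_μ(U)) dU = δ_{λμ}·z_λ`, where `p_λ(U) = ∏_i Tr(U^{λ_i})` and
`z_λ = ∏_i i^{m_i(λ)}·m_i(λ)! = λ.prod · ∏_{i ∈ λ} m_i(λ)!`. -/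
theorem stmt_15 (N : ℕ) (hN : 1 ≤ N)
    [MeasurableSpace (Matrix.unitaryGroup (Fin N) ℂ)]
    [BorelSpace (Matrix.unitaryGroup (Fin N) ℂ)]
    (μHaar : Measure (Matrix.unitaryGroup (Fin N) ℂ))
    [μHaar.IsHaarMeasure] [IsProbabilityMeasure μHaar]
    (lam mu : Multiset ℕ) (hlam : ∀ k ∈ lam, 0 < k) (hmu : ∀ k ∈ mu, 0 < k)
    (hsize : lam.sum ≤ N) :
    ∫ U, ((lam.map fun k => Matrix.trace ((U : Matrix (Fin N) (Fin N) ℂ) ^ k)).prod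
        * (starRingEnd ℂ)
            ((mu.map fun k => Matrix.trace ((U : Matrix (Fin N) (Fin N) ℂ) ^ k)).prod))
        ∂μHaar
      = if lam = mu then
          ((lam.prod : ℕ) : ℂ) * ∏ i ∈ lam.toFinset, ((lam.count i).factorial : ℂ)
        else 0 := by
  simpa [tracePowerSum, hallPairing, zLabel] using
    stmt_15_general μHaar (fun h => (hlam 0 h).false) (fun h => (hmu 0 h).false)
      (hsize.trans_eq (Fintype.card_fin N).symm)
end
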